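/- arXiv:2512.12126 — 2 statements merged into one kernel-verified Lean document; each statement's English description precedes it below -/
import Mathlib

section
/- For every word w in the commutator subgroup [F₂,F₂] of the free group F₂ on two generators, there exists a polynomial Q ∈ ℤ[s,t,u] such that for all x, y ∈ SL(2,ℂ), writing s = tr x, t = tr y, u = tr(xy), one has tr(w(x,y)) − 2 = Q(s,t,u)·(s² + t² + u² − s·t·u − 4). -/
open Matrix

abbrev SL2C := Matrix.SpecialLinearGroup (Fin 2) ℂ

noncomputable def tr2 (x : SL2C) : ℂ := Matrix.trace (x : Matrix (Fin 2) (Fin 2) ℂ)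

/-- The evaluation of a word `w` in the free group on two generators at a pair
of matrices `x y ∈ SL(2,ℂ)`. -/
noncomputable def wordEval (w : FreeGroup (Fin 2)) (x y : SL2C) : SL2C :=
  FreeGroup.lift ![x, y] w

abbrev M2 := Matrix (Fin 2) (Fin 2) ℂ

/-- evaluation of an integer polynomial at the three basic traces -/
noncomputable def pev (x y : SL2C) (Q : MvPolynomial (Fin 3) ℤ) : ℂ :=
  MvPolynomial.aeval ![tr2 x, tr2 y, tr2 (x * y)] Q

/-- families of matrices in the span of `1, x, y, xy` over the trace ring -/
def InA (f : SL2C → SL2C → M2) : Prop :=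
  ∃ a b c d : MvPolynomial (Fin 3) ℤ, ∀ x y : SL2C,
    f x y = pev x y a • (1 : M2) + pev x y b • (x : M2) + pev x y c • (y : M2)
      + pev x y d • ((x : M2) * (y : M2))

lemma pev_add (x y : SL2C) (p q) : pev x y (p + q) = pev x y p + pev x y q := by simp [pev]
lemma pev_sub (x y : SL2C) (p q) : pev x y (p - q) = pev x y p - pev x y q := by simp [pev]
lemma pev_neg (x y : SL2C) (p) : pev x y (-p) = - pev x y p := by simp [pev]
lemma pev_mul (x y : SL2C) (p q) : pev x y (p * q) = pev x y p * pev x y q := by simp [pev]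
lemma pev_zero (x y : SL2C) : pev x y 0 = 0 := by simp [pev]
lemma pev_one (x y : SL2C) : pev x y 1 = 1 := by simp [pev]
lemma pev_X0 (x y : SL2C) : pev x y (MvPolynomial.X 0) = tr2 x := by simp [pev]
lemma pev_X1 (x y : SL2C) : pev x y (MvPolynomial.X 1) = tr2 y := by simp [pev]
lemma pev_X2 (x y : SL2C) : pev x y (MvPolynomial.X 2) = tr2 (x * y) := by simp [pev]

lemma tr2_eq (x : SL2C) : tr2 x = x.1 0 0 + x.1 1 1 := by
  simp [tr2, Matrix.trace_fin_two]

lemma det_eq (x : SL2C) : x.1 0 0 * x.1 1 1 - x.1 0 1 * x.1 1 0 = 1 := by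
  rw [← Matrix.det_fin_two]; exact x.2

lemma sq_eq (x : SL2C) : (x : M2) * (x : M2) = tr2 x • (x : M2) - 1 := by
  have h := det_eq x
  ext i j
  fin_cases i <;> fin_cases j <;> simp [tr2_eq, Matrix.mul_apply, Fin.sum_univ_two] <;>
    first | linear_combination (0 : ℂ) | linear_combination (-1 : ℂ) * h

lemma inv_eq (x : SL2C) : ((x⁻¹ : SL2C) : M2) = tr2 x • (1 : M2) - (x : M2) := by
  rw [Matrix.SpecialLinearGroup.coe_inv]
  ext i j
  fin_cases i <;> fin_cases j <;> simp [tr2_eq, Matrix.adjugate_fin_two]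

lemma swap_eq (x y : SL2C) : (y : M2) * (x : M2) =
    (tr2 (x * y) - tr2 x * tr2 y) • (1 : M2) + tr2 y • (x : M2) + tr2 x • (y : M2)
      - (x : M2) * (y : M2) := by
  ext i j
  fin_cases i <;> fin_cases j <;> simp [tr2_eq, Matrix.mul_apply, Fin.sum_univ_two] <;> ring

lemma yxy_eq (x y : SL2C) : (y : M2) * ((x : M2) * (y : M2)) =
    (x : M2) + tr2 (x * y) • (y : M2) - tr2 x • (1 : M2) := by
  rw [← mul_assoc, swap_eq]
  simp only [sub_mul, add_mul, smul_mul_assoc, one_mul, mul_assoc, sq_eq, mul_sub, mul_smul_comm,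
    mul_one]
  module

lemma xyx_eq (x y : SL2C) : (x : M2) * (y : M2) * (x : M2) =
    (y : M2) + tr2 (x * y) • (x : M2) - tr2 y • (1 : M2) := by
  rw [mul_assoc, swap_eq]
  simp only [mul_sub, mul_add, mul_smul_comm, mul_one, ← mul_assoc, sq_eq, sub_mul,
    smul_mul_assoc, one_mul]
  module

lemma xxy_eq (x y : SL2C) : (x : M2) * ((x : M2) * (y : M2)) =
    tr2 x • ((x : M2) * (y : M2)) - (y : M2) := by
  rw [← mul_assoc, sq_eq, sub_mul, smul_mul_assoc, one_mul]

lemma xyy_eq (x y : SL2C) : (x : M2) * (y : M2) * (y : M2) =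
    tr2 y • ((x : M2) * (y : M2)) - (x : M2) := by
  rw [mul_assoc, sq_eq, mul_sub, mul_smul_comm, mul_one]

open MvPolynomial in
lemma InA.lx {f} (h : InA f) : InA (fun x y => (x : M2) * f x y) := by
  obtain ⟨a, b, c, d, h⟩ := h
  refine ⟨-b, a + X 0 * b, -d, c + X 0 * d, fun x y => ?_⟩
  simp only [h, mul_add, mul_smul_comm, mul_one, sq_eq, xxy_eq, pev_add, pev_mul, pev_neg, pev_X0]
  module

open MvPolynomial in
lemma InA.ly {f} (h : InA f) : InA (fun x y => (y : M2) * f x y) := by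
  obtain ⟨a, b, c, d, h⟩ := h
  refine ⟨b * (X 2 - X 0 * X 1) - c - d * X 0, b * X 1 + d, a + b * X 0 + c * X 1 + d * X 2, -b,
    fun x y => ?_⟩
  simp only [h, mul_add, mul_smul_comm, mul_one, sq_eq, yxy_eq, swap_eq x y, pev_add, pev_mul,
    pev_neg, pev_sub, pev_X0, pev_X1, pev_X2]
  module

open MvPolynomial in
lemma InA.rx {f} (h : InA f) : InA (fun x y => f x y * (x : M2)) := by
  obtain ⟨a, b, c, d, h⟩ := h
  refine ⟨c * (X 2 - X 0 * X 1) - b - d * X 1, a + b * X 0 + c * X 1 + d * X 2, c * X 0 + d, -c,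
    fun x y => ?_⟩
  simp only [h, add_mul, smul_mul_assoc, one_mul, sq_eq, xyx_eq, swap_eq x y, pev_add, pev_mul,
    pev_neg, pev_sub, pev_X0, pev_X1, pev_X2]
  module

open MvPolynomial in
lemma InA.ry {f} (h : InA f) : InA (fun x y => f x y * (y : M2)) := by
  obtain ⟨a, b, c, d, h⟩ := h
  refine ⟨-c, -d, a + X 1 * c, b + X 1 * d, fun x y => ?_⟩
  simp only [h, add_mul, smul_mul_assoc, one_mul, sq_eq, xyy_eq, pev_add, pev_mul, pev_neg, pev_X1]
  module

lemma InA.sub {f g} (h : InA f) (h' : InA g) : InA (fun x y => f x y - g x y) := by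
  obtain ⟨a, b, c, d, h⟩ := h
  obtain ⟨a', b', c', d', h'⟩ := h'
  refine ⟨a - a', b - b', c - c', d - d', fun x y => ?_⟩
  simp only [h, h', pev_sub]
  module

lemma InA.smul {f} (p : MvPolynomial (Fin 3) ℤ) (h : InA f) :
    InA (fun x y => pev x y p • f x y) := by
  obtain ⟨a, b, c, d, h⟩ := h
  refine ⟨p * a, p * b, p * c, p * d, fun x y => ?_⟩
  simp only [h, pev_mul]
  module

lemma InA_one : InA (fun _ _ => 1) :=
  ⟨1, 0, 0, 0, fun x y => by simp [pev_one, pev_zero]⟩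

lemma InA.lw (w : FreeGroup (Fin 2)) :
    ∀ {f}, InA f → InA (fun x y => (wordEval w x y : M2) * f x y) := by
  induction w using FreeGroup.induction_on with
  | C1 => intro f h; simpa [wordEval] using h
  | of i =>
    intro f h
    fin_cases i
    · simpa [wordEval] using h.lx
    · simpa [wordEval] using h.ly
  | inv_of i _ =>
    intro f h
    fin_cases i
    · have := (h.smul (MvPolynomial.X 0)).sub h.lx
      have e : ∀ x y, wordEval (FreeGroup.of 0)⁻¹ x y = x⁻¹ := fun x y => by simp [wordEval]
      change InA (fun x y => (wordEval (FreeGroup.of 0)⁻¹ x y : M2) * f x y)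
      simpa only [e, inv_eq, sub_mul, smul_mul_assoc,
        one_mul, pev_X0] using this
    · have := (h.smul (MvPolynomial.X 1)).sub h.ly
      have e : ∀ x y, wordEval (FreeGroup.of 1)⁻¹ x y = y⁻¹ := fun x y => by simp [wordEval]
      change InA (fun x y => (wordEval (FreeGroup.of 1)⁻¹ x y : M2) * f x y)
      simpa only [e, inv_eq, sub_mul, smul_mul_assoc,
        one_mul, pev_X1] using this
  | mul v w hv hw =>
    intro f h
    simpa [wordEval, mul_assoc] using hv (hw h)

lemma InA.rw (w : FreeGroup (Fin 2)) :
    ∀ {f}, InA f → InA (fun x y => f x y * (wordEval w x y : M2)) := by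
  induction w using FreeGroup.induction_on with
  | C1 => intro f h; simpa [wordEval] using h
  | of i =>
    intro f h
    fin_cases i
    · simpa [wordEval] using h.rx
    · simpa [wordEval] using h.ry
  | inv_of i _ =>
    intro f h
    fin_cases i
    · have := (h.smul (MvPolynomial.X 0)).sub h.rx
      have e : ∀ x y, wordEval (FreeGroup.of 0)⁻¹ x y = x⁻¹ := fun x y => by simp [wordEval]
      change InA (fun x y => f x y * (wordEval (FreeGroup.of 0)⁻¹ x y : M2))
      simpa only [e, inv_eq, mul_sub, mul_smul_comm,
        mul_one, pev_X0] using this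
    · have := (h.smul (MvPolynomial.X 1)).sub h.ry
      have e : ∀ x y, wordEval (FreeGroup.of 1)⁻¹ x y = y⁻¹ := fun x y => by simp [wordEval]
      change InA (fun x y => f x y * (wordEval (FreeGroup.of 1)⁻¹ x y : M2))
      simpa only [e, inv_eq, mul_sub, mul_smul_comm,
        mul_one, pev_X1] using this
  | mul v w hv hw =>
    intro f h
    simpa [wordEval, mul_assoc] using hw (hv h)

/-- the trace of the commutator, minus two -/
noncomputable def Dd (x y : SL2C) : ℂ :=
  tr2 x ^ 2 + tr2 y ^ 2 + tr2 (x * y) ^ 2 - tr2 x * tr2 y * tr2 (x * y) - 4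

/-- scalar families divisible by `Dd` -/
def DivD (g : SL2C → SL2C → ℂ) : Prop :=
  ∃ Q : MvPolynomial (Fin 3) ℤ, ∀ x y, g x y = pev x y Q * Dd x y

lemma DivD.add {f g} (h : DivD f) (h' : DivD g) : DivD (fun x y => f x y + g x y) := by
  obtain ⟨P, h⟩ := h
  obtain ⟨Q, h'⟩ := h'
  exact ⟨P + Q, fun x y => by simp only [h, h', pev_add]; ring⟩

lemma DivD.neg {f} (h : DivD f) : DivD (fun x y => - f x y) := by
  obtain ⟨P, h⟩ := h
  exact ⟨-P, fun x y => by simp only [h, pev_neg]; ring⟩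

lemma wordEval_mul (v w x y) : (wordEval (v * w) x y : M2) =
    (wordEval v x y : M2) * (wordEval w x y : M2) := by simp [wordEval]

lemma wordEval_mul_inv (w x y) :
    (wordEval w x y : M2) * (wordEval w⁻¹ x y : M2) = 1 := by
  rw [← wordEval_mul]; simp [wordEval]

/-- the words congruent to `1` modulo the radical of the trace form -/
def NN : Subgroup (FreeGroup (Fin 2)) where
  carrier := {w | ∀ f, InA f → DivD (fun x y => trace (((wordEval w x y : M2) - 1) * f x y))}
  one_mem' := fun f _ => ⟨0, fun x y => by simp [wordEval, pev_zero]⟩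
  mul_mem' := by
    intro v w hv hw f h
    have := (hv _ (h.lw w)).add (hw f h)
    convert this using 3 with x y
    rw [wordEval_mul, ← trace_add]
    congr 1
    noncomm_ring
  inv_mem' := by
    intro w hw f h
    have := (hw _ (h.lw w⁻¹)).neg
    convert this using 3 with x y
    rw [← trace_neg]
    congr 1
    rw [← mul_assoc, sub_mul (wordEval w x y : M2), wordEval_mul_inv]
    noncomm_ring

instance NN_normal : NN.Normal where
  conj_mem := by
    intro w hw g f h
    have := hw _ ((h.rw g).lw g⁻¹)
    convert this using 3 with x y
    have e : (wordEval (g * w * g⁻¹) x y : M2) - 1 =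
        (wordEval g x y : M2) * (((wordEval w x y : M2) - 1) * (wordEval g⁻¹ x y : M2)) := by
      rw [wordEval_mul, wordEval_mul, sub_mul, mul_sub, one_mul, wordEval_mul_inv, mul_assoc]
    rw [e, mul_assoc, trace_mul_comm]
    simp only [mul_assoc]

lemma key (x y : SL2C) (a b c d : ℂ) :
    trace (((x : M2) * (y : M2) - (y : M2) * (x : M2)) *
      (a • (1 : M2) + b • (x : M2) + c • (y : M2) + d • ((x : M2) * (y : M2)))) = d * Dd x y := by
  have hx := det_eq x
  have hy := det_eq y
  simp only [Dd, tr2_eq, trace_fin_two, Matrix.mul_apply, Fin.sum_univ_two,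
    Matrix.SpecialLinearGroup.coe_mul, Matrix.sub_apply, Matrix.add_apply, Matrix.smul_apply,
    smul_eq_mul]
  simp
  generalize x.1 0 0 = p at *
  generalize x.1 0 1 = q at *
  generalize x.1 1 0 = r at *
  generalize x.1 1 1 = s at *
  generalize y.1 0 0 = p' at *
  generalize y.1 0 1 = q' at *
  generalize y.1 1 0 = r' at *
  generalize y.1 1 1 = s' at *
  linear_combination d * ((p + s) ^ 2 - 4) * hy + d * ((p' + s') ^ 2 - 4 * (p' * s' - q' * r')) * hx

lemma comm_mem : (FreeGroup.of 0 * FreeGroup.of 1) * (FreeGroup.of 1 * FreeGroup.of 0)⁻¹ ∈ NN := by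
  intro f h
  obtain ⟨a, b, c, d, h'⟩ := h.lw (FreeGroup.of 1 * FreeGroup.of 0)⁻¹
  refine ⟨d, fun x y => ?_⟩
  have e : (wordEval ((FreeGroup.of 0 * FreeGroup.of 1) * (FreeGroup.of 1 * FreeGroup.of 0)⁻¹) x y
      : M2) - 1 = ((x : M2) * (y : M2) - (y : M2) * (x : M2)) *
        (wordEval (FreeGroup.of 1 * FreeGroup.of 0)⁻¹ x y : M2) := by
    have e1 : (wordEval (FreeGroup.of 0 * FreeGroup.of 1) x y : M2) = (x : M2) * (y : M2) := by
      simp [wordEval]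
    have e2 : (wordEval (FreeGroup.of 1 * FreeGroup.of 0) x y : M2) = (y : M2) * (x : M2) := by
      simp [wordEval]
    rw [wordEval_mul, ← wordEval_mul_inv (FreeGroup.of 1 * FreeGroup.of 0) x y, ← sub_mul, e1, e2]
  have k := key x y (pev x y a) (pev x y b) (pev x y c) (pev x y d)
  rw [← h' x y] at k
  rw [← k]
  beta_reduce
  rw [e, mul_assoc]

lemma comm_le : commutator (FreeGroup (Fin 2)) ≤ NN := by
  have h01 : Commute (QuotientGroup.mk' NN (FreeGroup.of 0)) (QuotientGroup.mk' NN (FreeGroup.of 1)) := by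
    have := (QuotientGroup.eq_one_iff (N := NN) _).2 comm_mem
    rw [← QuotientGroup.mk'_apply, map_mul, map_inv, mul_inv_eq_one, map_mul, map_mul] at this
    exact this
  have hgen : ∀ i j : Fin 2,
      Commute (QuotientGroup.mk' NN (FreeGroup.of i)) (QuotientGroup.mk' NN (FreeGroup.of j)) := by
    intro i j
    fin_cases i <;> fin_cases j
    · exact Commute.refl _
    · exact h01
    · exact h01.symm
    · exact Commute.refl _
  have h1 : ∀ (i : Fin 2) w, Commute (QuotientGroup.mk' NN (FreeGroup.of i)) (QuotientGroup.mk' NN w) := by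
    intro i w
    induction w using FreeGroup.induction_on with
    | C1 => rw [map_one]; exact Commute.one_right _
    | of j => exact hgen i j
    | inv_of j h => rw [map_inv]; exact h.inv_right
    | mul v w hv hw => rw [map_mul]; exact hv.mul_right hw
  have h2 : ∀ v w, Commute (QuotientGroup.mk' NN v) (QuotientGroup.mk' NN w) := by
    intro v w
    induction v using FreeGroup.induction_on with
    | C1 => rw [map_one]; exact Commute.one_left _
    | of j => exact h1 j w
    | inv_of j h => rw [map_inv]; exact h.inv_left
    | mul v w hv hw => rw [map_mul]; exact hv.mul_left hw
  rw [commutator_def, Subgroup.commutator_le]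
  intro v _ w _
  rw [← QuotientGroup.eq_one_iff, ← QuotientGroup.mk'_apply, map_commutatorElement,
    commutatorElement_eq_one_iff_commute]
  exact h2 v w

/-- for `w ∈ [F₂,F₂]` there exists `Q ∈ ℤ[s,t,u]` with
`tr (w(x,y)) − 2 = Q(s,t,u)·(s² + t² + u² − s·t·u − 4)` where
`s = tr x`, `t = tr y`, `u = tr (xy)`. -/
theorem trace_commutator_word_div (w : FreeGroup (Fin 2))
    (hw : w ∈ commutator (FreeGroup (Fin 2))) :
    ∃ Q : MvPolynomial (Fin 3) ℤ,
      ∀ x y : SL2C,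
        tr2 (wordEval w x y) - 2 =
          MvPolynomial.aeval ![tr2 x, tr2 y, tr2 (x * y)] Q *
            (tr2 x ^ 2 + tr2 y ^ 2 + tr2 (x * y) ^ 2
              - tr2 x * tr2 y * tr2 (x * y) - 4) := by
  obtain ⟨Q, hQ⟩ := comm_le hw _ InA_one
  refine ⟨Q, fun x y => ?_⟩
  have := hQ x y
  beta_reduce at this
  rw [mul_one, trace_sub, trace_one] at this
  simpa [pev, Dd, tr2] using this
end

section
/- Two matrices x, y ∈ SL(2,ℂ) have a common eigenvector (i.e., there exists a nonzero vector v ∈ ℂ² and scalars λ, μ ∈ ℂ with x·v = λ·v and y·v = μ·v) if and only if tr(x)² + tr(y)² + tr(xy)² − tr(x)·tr(y)·tr(xy) − 4 = 0. -/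
open Matrix

theorem aux_root (A B C : ℂ) : ∃ p q : ℂ, (p ≠ 0 ∨ q ≠ 0) ∧ A * q ^ 2 + B * p * q + C * p ^ 2 = 0 := by
  by_cases hA : A = 0
  · exact ⟨0, 1, Or.inr one_ne_zero, by simp [hA]⟩
  · obtain ⟨s, hs⟩ := IsAlgClosed.exists_eq_mul_self (discrim A B C)
    obtain ⟨t, ht⟩ := exists_quadratic_eq_zero hA ⟨s, hs⟩
    exact ⟨1, t, Or.inl one_ne_zero, by linear_combination ht⟩

theorem aux_common (A B C A' B' C' : ℂ)
    (h : (C * A' - C' * A) ^ 2 = (B * C' - B' * C) * (A * B' - A' * B)) :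
    ∃ p q : ℂ, (p ≠ 0 ∨ q ≠ 0) ∧ A * q ^ 2 + B * p * q + C * p ^ 2 = 0 ∧
      A' * q ^ 2 + B' * p * q + C' * p ^ 2 = 0 := by
  by_cases hR : A * B' - A' * B = 0
  · have hQ : C * A' - C' * A = 0 := by
      rw [hR, mul_zero] at h
      exact pow_eq_zero_iff (two_ne_zero) |>.1 h
    by_cases hP : B * C' - B' * C = 0
    · by_cases h0 : A = 0 ∧ B = 0 ∧ C = 0
      · obtain ⟨rfl, rfl, rfl⟩ := h0
        obtain ⟨p, q, hpq, hr⟩ := aux_root A' B' C'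
        exact ⟨p, q, hpq, by ring, hr⟩
      · obtain ⟨p, q, hpq, hr⟩ := aux_root A B C
        refine ⟨p, q, hpq, hr, ?_⟩
        by_contra hne
        apply h0
        refine ⟨?_, ?_, ?_⟩
        · refine (mul_eq_zero.1 ?_).resolve_right hne
          linear_combination A' * hr + p * q * hR - p ^ 2 * hQ
        · refine (mul_eq_zero.1 ?_).resolve_right hne
          linear_combination B' * hr - q ^ 2 * hR + p ^ 2 * hP
        · refine (mul_eq_zero.1 ?_).resolve_right hne
          linear_combination C' * hr + q ^ 2 * hQ - p * q * hP
    · refine ⟨0, 1, Or.inr one_ne_zero, ?_, ?_⟩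
      · have : A = 0 := by
          refine (mul_eq_zero.1 ?_).resolve_right hP
          linear_combination (-B) * hQ - C * hR
        simp [this]
      · have : A' = 0 := by
          refine (mul_eq_zero.1 ?_).resolve_right hP
          linear_combination (-B') * hQ - C' * hR
        simp [this]
  · refine ⟨A * B' - A' * B, C * A' - C' * A, Or.inl hR, ?_, ?_⟩
    · linear_combination A * h
    · linear_combination A' * h

theorem aux_eig (a b c d p q : ℂ) (hpq : p ≠ 0 ∨ q ≠ 0)
    (h : b * q ^ 2 + (a - d) * p * q + (-c) * p ^ 2 = 0) :
    ∃ l : ℂ, a * p + b * q = l * p ∧ c * p + d * q = l * q := by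
  rcases hpq with hp | hq
  · refine ⟨(a * p + b * q) / p, by field_simp, ?_⟩
    field_simp
    linear_combination -h
  · refine ⟨(c * p + d * q) / q, ?_, by field_simp⟩
    field_simp
    linear_combination h

theorem aux_form (a b c d p q l : ℂ) (h1 : a * p + b * q = l * p) (h2 : c * p + d * q = l * q) :
    b * q ^ 2 + (a - d) * p * q + (-c) * p ^ 2 = 0 := by
  linear_combination q * h1 - p * h2

theorem aux_res (A B C A' B' C' p q : ℂ) (hpq : p ≠ 0 ∨ q ≠ 0)
    (h1 : A * q ^ 2 + B * p * q + C * p ^ 2 = 0)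
    (h2 : A' * q ^ 2 + B' * p * q + C' * p ^ 2 = 0) :
    (C * A' - C' * A) ^ 2 = (B * C' - B' * C) * (A * B' - A' * B) := by
  rcases hpq with hp | hq
  · obtain ⟨t, rfl⟩ : ∃ t, q = t * p := ⟨q / p, by field_simp⟩
    have e1 : C = -(A * t ^ 2 + B * t) := by
      apply mul_right_cancel₀ (pow_ne_zero 2 hp)
      linear_combination h1
    have e2 : C' = -(A' * t ^ 2 + B' * t) := by
      apply mul_right_cancel₀ (pow_ne_zero 2 hp)
      linear_combination h2
    rw [e1, e2]; ring
  · obtain ⟨t, rfl⟩ : ∃ t, p = t * q := ⟨p / q, by field_simp⟩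
    have e1 : A = -(C * t ^ 2 + B * t) := by
      apply mul_right_cancel₀ (pow_ne_zero 2 hq)
      linear_combination h1
    have e2 : A' = -(C' * t ^ 2 + B' * t) := by
      apply mul_right_cancel₀ (pow_ne_zero 2 hq)
      linear_combination h2
    rw [e1, e2]; ring

/-- two matrices `x, y ∈ SL(2,ℂ)` have a common eigenvector iff
`tr(x)² + tr(y)² + tr(xy)² − tr(x)·tr(y)·tr(xy) − 4 = 0`. -/
theorem common_eigenvector_iff (x y : SL2C) :
    (∃ v : Fin 2 → ℂ, v ≠ 0 ∧ ∃ lam mu : ℂ,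
        (x : Matrix (Fin 2) (Fin 2) ℂ).mulVec v = lam • v ∧
        (y : Matrix (Fin 2) (Fin 2) ℂ).mulVec v = mu • v) ↔
    tr2 x ^ 2 + tr2 y ^ 2 + tr2 (x * y) ^ 2
      - tr2 x * tr2 y * tr2 (x * y) - 4 = 0 := by
  have hx := x.det_coe
  have hy := y.det_coe
  rw [Matrix.det_fin_two] at hx hy
  simp only [tr2, Matrix.SpecialLinearGroup.coe_mul, Matrix.trace_fin_two, Matrix.mul_apply,
    Fin.sum_univ_two]
  generalize (x : Matrix (Fin 2) (Fin 2) ℂ) = X at *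
  generalize (y : Matrix (Fin 2) (Fin 2) ℂ) = Y at *
  have key : ∀ v : Fin 2 → ℂ, ∀ M : Matrix (Fin 2) (Fin 2) ℂ, ∀ l : ℂ, M.mulVec v = l • v ↔
      (M 0 0 * v 0 + M 0 1 * v 1 = l * v 0 ∧ M 1 0 * v 0 + M 1 1 * v 1 = l * v 1) := by
    intro v M l
    rw [funext_iff, Fin.forall_fin_two]
    simp [Matrix.mulVec, dotProduct, Fin.sum_univ_two]
  simp only [key]
  generalize X 0 0 = a at *
  generalize X 0 1 = b at *
  generalize X 1 0 = c at *
  generalize X 1 1 = d at *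
  generalize Y 0 0 = e at *
  generalize Y 0 1 = f at *
  generalize Y 1 0 = g at *
  generalize Y 1 1 = k at *
  constructor
  · rintro ⟨v, hv, l, m, ⟨h1, h2⟩, h3, h4⟩
    have hpq : v 0 ≠ 0 ∨ v 1 ≠ 0 := by
      by_contra! hc
      apply hv
      funext i
      fin_cases i
      · exact hc.1
      · exact hc.2
    have := aux_res _ _ _ _ _ _ _ _ hpq (aux_form _ _ _ _ _ _ _ h1 h2)
      (aux_form _ _ _ _ _ _ _ h3 h4)
    linear_combination this + (4 - (e + k) ^ 2) * hx + (4 * (a * d - b * c) - (a + d) ^ 2) * hy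
  · intro h
    obtain ⟨p, q, hpq, h1, h2⟩ := aux_common b (a - d) (-c) f (e - k) (-g) (by
      linear_combination h - (4 - (e + k) ^ 2) * hx
        - (4 * (a * d - b * c) - (a + d) ^ 2) * hy)
    obtain ⟨l, hl⟩ := aux_eig _ _ _ _ _ _ hpq h1
    obtain ⟨m, hm⟩ := aux_eig _ _ _ _ _ _ hpq h2
    refine ⟨![p, q], ?_, l, m, by simpa using hl, by simpa using hm⟩
    intro h0
    have e0 := congrFun h0 0
    have e1 := congrFun h0 1
    simp at e0 e1
    rcases hpq with hp | hq
    · exact hp e0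
    · exact hq e1
end
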